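/- arXiv:2212.14003 — 2 statements merged into one kernel-verified Lean document; each statement's English description precedes it below -/
import Mathlib

section
/- Let D be a nonempty closed convex subset of ℝ^N, let λ, λ* ∈ D, let x ∈ ℝ^D, let a > 0, and suppose ‖F(x)‖ ≤ L_b. Then the dual update λ⁺ := P_D[λ + a F(x)] satisfies ‖λ⁺ − λ*‖² ≤ ‖λ − λ*‖² + a² L_b² + 2a(L(x, λ) − L(x, λ*)). -/
/-!
The projection `p` of `z` onto a set that is star-convex about `w` satisfies the obtuse-angle
inequality `⟪z - p, w - p⟫ ≤ 0`, so replacing `z` by `p` does not increase the distance to `w`.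
For the ascent point `z = λ + a F(x)` and `w = λ*`, the cross term in the expansion of
`‖z - λ*‖²` is `2a⟪F(x), λ - λ*⟫`, a difference of Lagrangian values because `L(x, ·)` is affine
with gradient `F(x)`.
-/

open scoped RealInnerProductSpace

section ProjectedStep

variable {E : Type*} [NormedAddCommGroup E] [InnerProductSpace ℝ E] {D : Set E} {g p u w z : E}

theorem inner_sub_nonpos_of_isMinOn_norm_sub
    (hD : StarConvex ℝ w D) (hp : p ∈ D) (hmin : IsMinOn (fun v ↦ ‖v - z‖) D p) :
    ⟪z - p, w - p⟫ ≤ 0 := by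
  -- On the segment `[w, p] ⊆ D`, which is convex even if `D` is not, `p` is still nearest to `z`.
  have hmin_segment : IsMinOn (fun v ↦ ‖z - v‖) (segment ℝ w p) p := by
    simpa only [norm_sub_rev z] using hmin.on_subset (hD.segment_subset hp)
  have hp_segment : p ∈ segment ℝ w p := right_mem_segment ℝ w p
  exact (norm_eq_iInf_iff_real_inner_le_zero (convex_segment w p) hp_segment).1
    (hmin_segment.iInf_eq hp_segment).symm w (left_mem_segment ℝ w p)

theorem norm_sub_le_norm_sub_of_inner_nonpos (h : ⟪z - p, w - p⟫ ≤ 0) :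
    ‖p - w‖ ≤ ‖z - w‖ := by
  have hcosine : ‖z - w‖ ^ 2 = ‖z - p‖ ^ 2 - 2 * ⟪z - p, w - p⟫ + ‖p - w‖ ^ 2 := by
    rw [← sub_sub_sub_cancel_right z w p, norm_sub_sq_real, norm_sub_rev w p]
  refine le_of_sq_le_sq ?_ (norm_nonneg _)
  linarith [sq_nonneg ‖z - p‖]

theorem norm_add_smul_sub_sq (u g w : E) (a : ℝ) :
    ‖u + a • g - w‖ ^ 2 = ‖u - w‖ ^ 2 + a ^ 2 * ‖g‖ ^ 2 + 2 * a * ⟪g, u - w⟫ := by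
  rw [add_sub_right_comm, norm_add_sq_real, real_inner_smul_right, real_inner_comm, norm_smul,
    mul_pow, Real.norm_eq_abs, sq_abs]
  ring

theorem norm_sub_sq_le_of_isMinOn_norm_sub_add_smul {a C : ℝ}
    (hD : StarConvex ℝ w D) (hp : p ∈ D) (hmin : IsMinOn (fun v ↦ ‖v - (u + a • g)‖) D p)
    (hg : ‖g‖ ≤ C) :
    ‖p - w‖ ^ 2 ≤ ‖u - w‖ ^ 2 + a ^ 2 * C ^ 2 + 2 * a * ⟪g, u - w⟫ :=
  calc
    ‖p - w‖ ^ 2 ≤ ‖u + a • g - w‖ ^ 2 := by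
      gcongr
      exact norm_sub_le_norm_sub_of_inner_nonpos (inner_sub_nonpos_of_isMinOn_norm_sub hD hp hmin)
    _ = ‖u - w‖ ^ 2 + a ^ 2 * ‖g‖ ^ 2 + 2 * a * ⟪g, u - w⟫ := norm_add_smul_sub_sq u g w a
    _ ≤ ‖u - w‖ ^ 2 + a ^ 2 * C ^ 2 + 2 * a * ⟪g, u - w⟫ := by gcongr

end ProjectedStep

section Lagrangian

variable {X E : Type*} [NormedAddCommGroup E] [InnerProductSpace ℝ E]

/-- The Lagrangian `L(x, μ) = f₀(x) + ⟪μ, F(x)⟫` of the problem of minimizing `f₀` subject to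
constraints on `F`. The constraint map and the multipliers `μ` take values in the same real inner
product space, which need not be `ℝⁿ`. -/
def lagrangian (f₀ : X → ℝ) (F : X → E) (x : X) (μ : E) : ℝ :=
  f₀ x + ⟪μ, F x⟫

theorem lagrangian_sub_lagrangian (f₀ : X → ℝ) (F : X → E) (x : X) (μ ν : E) :
    lagrangian f₀ F x μ - lagrangian f₀ F x ν = ⟪F x, μ - ν⟫ := by
  rw [lagrangian, lagrangian, add_sub_add_left_eq_sub, ← inner_sub_left, real_inner_comm]

theorem lagrangian_euclideanSpace {ι : Type*} [Fintype ι] (f₀ : X → ℝ)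
    (F : X → EuclideanSpace ℝ ι) (x : X) (μ : EuclideanSpace ℝ ι) :
    lagrangian f₀ F x μ = f₀ x + ∑ i, μ i * F x i := by
  simp only [lagrangian, PiLp.inner_apply, Real.inner_apply]

theorem stmt1_general {D : Set E} (f₀ : X → ℝ) (F : X → E) {x : X} {a C : ℝ} {μ μ' ν : E}
    (hD : StarConvex ℝ ν D) (hF : ‖F x‖ ≤ C) (hμ' : μ' ∈ D)
    (hproj : IsMinOn (fun v ↦ ‖v - (μ + a • F x)‖) D μ') :
    ‖μ' - ν‖ ^ 2 ≤ ‖μ - ν‖ ^ 2 + a ^ 2 * C ^ 2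
      + 2 * a * (lagrangian f₀ F x μ - lagrangian f₀ F x ν) := by
  rw [lagrangian_sub_lagrangian]
  exact norm_sub_sq_le_of_isMinOn_norm_sub_add_smul hD hμ' hproj hF

end Lagrangian

/-- pointwise form of Lemma 1b: one projected dual-subgradient
ascent step. -/
theorem stmt1 {d n : ℕ}
    (Dset : Set (EuclideanSpace ℝ (Fin n)))
    (hDne : Dset.Nonempty) (hDcl : IsClosed Dset) (hDcv : Convex ℝ Dset)
    (f0 : EuclideanSpace ℝ (Fin d) → ℝ)
    (f : Fin n → EuclideanSpace ℝ (Fin d) → ℝ)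
    (hf0 : ConvexOn ℝ Set.univ f0) (hf : ∀ i, ConvexOn ℝ Set.univ (f i))
    (L : EuclideanSpace ℝ (Fin d) → EuclideanSpace ℝ (Fin n) → ℝ)
    (hL : ∀ y μ, L y μ = f0 y + ∑ i, μ i * f i y)
    (F : EuclideanSpace ℝ (Fin d) → EuclideanSpace ℝ (Fin n))
    (hF : ∀ y i, F y i = f i y)
    (lam lamstar : EuclideanSpace ℝ (Fin n))
    (hlam : lam ∈ Dset) (hlamstar : lamstar ∈ Dset)
    (x : EuclideanSpace ℝ (Fin d))
    (a Lb : ℝ) (ha : 0 < a) (hFb : ‖F x‖ ≤ Lb)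
    -- λ⁺ is the Euclidean projection of λ + a F(x) onto D
    (lamplus : EuclideanSpace ℝ (Fin n))
    (hlamplusD : lamplus ∈ Dset)
    (hproj : ∀ μ ∈ Dset,
      ‖lamplus - (lam + a • F x)‖ ≤ ‖μ - (lam + a • F x)‖) :
    ‖lamplus - lamstar‖ ^ 2 ≤
      ‖lam - lamstar‖ ^ 2 + a ^ 2 * Lb ^ 2
        + 2 * a * (L x lam - L x lamstar) := by
  obtain rfl : L = lagrangian f0 F := by
    ext y μ
    simp only [hL, lagrangian_euclideanSpace, hF]
  exact stmt1_general f0 F (hDcv.starConvex hlamstar) hFb hlamplusD (isMinOn_iff.2 hproj)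
end

section
/- Let ζ > 0, let (δ_k) be a bounded sequence of nonnegative reals, let (Z_k) be a sequence of positive reals with Z_k → ∞, and define r_k := (ζ + √(2ζ² + δ_k Z_k))/2. If (v_k) is a sequence of nonnegative reals satisfying v_k ≤ (1/r_k) ( δ_k + (2/Z_k)(ζ + r_k)² ) for all k, then lim_{k→∞} v_k = 0. -/
open Filter

/-!
The choice of `r` says exactly that `(2r - ζ)² = 2ζ² + δZ`, which turns the bound into
`(6r + ζ² / r) / Z`. As `4r(r - ζ) = ζ² + δZ ≥ ζ²`, this is at most `(10r - 4ζ) / Z`. Finally `r` is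
homogeneous of degree one in `(ζ, δ, Z)`, so `r / Z` is a continuous function of `ζ / Z` and `δ / Z`
that vanishes at the origin.
-/

/-- The per-round parameter `r*` of the dual projection set, as a function of `ζ`, `δ_k` and
`Z_k`; the square root is meaningful when `0 ≤ 2ζ² + δZ`. -/
noncomputable def dualMargin (ζ δ Z : ℝ) : ℝ :=
  (ζ + √(2 * ζ ^ 2 + δ * Z)) / 2

/-- The constraint-violation bound of Theorem 1 for the parameter `r`. It is meant for nonzero `Z`
and `r`, since Lean divides by zero to zero. -/
noncomputable def violationBound (ζ δ Z r : ℝ) : ℝ :=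
  (1 / r) * (δ + (2 / Z) * (ζ + r) ^ 2)

section Pointwise

variable {ζ δ Z r : ℝ}

lemma dualMargin_pos (hζ : 0 < ζ) : 0 < dualMargin ζ δ Z := by
  unfold dualMargin
  positivity

lemma sq_two_mul_dualMargin_sub (h : 0 ≤ 2 * ζ ^ 2 + δ * Z) :
    (2 * dualMargin ζ δ Z - ζ) ^ 2 = 2 * ζ ^ 2 + δ * Z := by
  rw [dualMargin, mul_div_cancel₀ _ two_ne_zero, add_sub_cancel_left, Real.sq_sqrt h]

lemma dualMargin_div {c : ℝ} (hc : 0 ≤ c) :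
    dualMargin (ζ / c) (δ / c) (Z / c) = dualMargin ζ δ Z / c := by
  have hsqrt : √(2 * (ζ / c) ^ 2 + δ / c * (Z / c)) = √(2 * ζ ^ 2 + δ * Z) / c := by
    calc √(2 * (ζ / c) ^ 2 + δ / c * (Z / c))
        = √((2 * ζ ^ 2 + δ * Z) / c ^ 2) := by ring_nf
      _ = √(2 * ζ ^ 2 + δ * Z) / c := by rw [Real.sqrt_div' _ (sq_nonneg c), Real.sqrt_sq hc]
  rw [dualMargin, dualMargin, hsqrt]
  ring

lemma violationBound_eq_of_sq_sub_eq (hZ : Z ≠ 0) (hr : r ≠ 0)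
    (h : (2 * r - ζ) ^ 2 = 2 * ζ ^ 2 + δ * Z) :
    violationBound ζ δ Z r = (6 * r + ζ ^ 2 / r) / Z := by
  rw [violationBound]
  field_simp
  linear_combination -h

lemma violationBound_dualMargin_le (hδ : 0 ≤ δ) (hZ : 0 < Z) (hr : 0 < dualMargin ζ δ Z) :
    violationBound ζ δ Z (dualMargin ζ δ Z) ≤ 10 * (dualMargin ζ δ Z / Z) - 4 * (ζ / Z) := by
  have hδZ : 0 ≤ δ * Z := by positivity
  have hsq := sq_two_mul_dualMargin_sub (ζ := ζ) (by positivity : 0 ≤ 2 * ζ ^ 2 + δ * Z)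
  rw [violationBound_eq_of_sq_sub_eq hZ.ne' hr.ne' hsq]
  set r := dualMargin ζ δ Z
  have hdiv : ζ ^ 2 / r ≤ 4 * (r - ζ) := by
    rw [div_le_iff₀ hr]
    linarith
  calc (6 * r + ζ ^ 2 / r) / Z
      ≤ (6 * r + 4 * (r - ζ)) / Z := by gcongr
    _ = 10 * (r / Z) - 4 * (ζ / Z) := by ring

end Pointwise

section Limit

variable {ι : Type*} {l : Filter ι} {ζ δ Z v : ι → ℝ}

lemma tendsto_dualMargin_div (hZ : ∀ᶠ k in l, 0 < Z k)
    (hζZ : Tendsto (fun k => ζ k / Z k) l (nhds 0))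
    (hδZ : Tendsto (fun k => δ k / Z k) l (nhds 0)) :
    Tendsto (fun k => dualMargin (ζ k) (δ k) (Z k) / Z k) l (nhds 0) := by
  have hnormalized : Tendsto (fun k => dualMargin (ζ k / Z k) (δ k / Z k) 1) l (nhds 0) := by
    simpa [dualMargin] using
      (hζZ.add (((hζZ.pow 2).const_mul 2).add (hδZ.mul_const 1)).sqrt).div_const 2
  refine hnormalized.congr' ?_
  filter_upwards [hZ] with k hZk
  rw [← dualMargin_div hZk.le, div_self hZk.ne']

theorem stmt12_general (hδ : ∀ᶠ k in l, 0 ≤ δ k) (hZ : ∀ᶠ k in l, 0 < Z k)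
    (hζZ : Tendsto (fun k => ζ k / Z k) l (nhds 0))
    (hδZ : Tendsto (fun k => δ k / Z k) l (nhds 0))
    (hr : ∀ᶠ k in l, 0 < dualMargin (ζ k) (δ k) (Z k))
    (hv0 : ∀ᶠ k in l, 0 ≤ v k)
    (hv : ∀ᶠ k in l,
      v k ≤ violationBound (ζ k) (δ k) (Z k) (dualMargin (ζ k) (δ k) (Z k))) :
    Tendsto v l (nhds 0) := by
  have hlim : Tendsto (fun k => 10 * (dualMargin (ζ k) (δ k) (Z k) / Z k) - 4 * (ζ k / Z k))
      l (nhds 0) := by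
    simpa using ((tendsto_dualMargin_div hZ hζZ hδZ).const_mul 10).sub (hζZ.const_mul 4)
  refine squeeze_zero' hv0 ?_ hlim
  filter_upwards [hδ, hZ, hr, hv] with k hδk hZk hrk hvk
  exact hvk.trans (violationBound_dualMargin_le hδk hZk hrk)

end Limit

/-- analytic content of Corollary 1: with the optimal per-round
choice r*_k, the constraint-violation bound tends to zero. -/
theorem stmt12 (ζ : ℝ) (hζ : 0 < ζ)
    (δ : ℕ → ℝ) (hδ0 : ∀ k, 0 ≤ δ k) (hδbdd : ∃ M : ℝ, ∀ k, δ k ≤ M)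
    (Z : ℕ → ℝ) (hZpos : ∀ k, 0 < Z k) (hZ : Tendsto Z atTop atTop)
    (r : ℕ → ℝ)
    (hr : ∀ k, r k = (ζ + Real.sqrt (2 * ζ ^ 2 + δ k * Z k)) / 2)
    (v : ℕ → ℝ) (hv0 : ∀ k, 0 ≤ v k)
    (hv : ∀ k, v k ≤ (1 / r k) * (δ k + (2 / Z k) * (ζ + r k) ^ 2)) :
    Tendsto v atTop (nhds 0) := by
  obtain ⟨M, hM⟩ := hδbdd
  obtain rfl : r = fun k => dualMargin ζ (δ k) (Z k) := funext hr
  exact stmt12_general (.of_forall hδ0) (.of_forall hZpos) (tendsto_const_nhds.div_atTop hZ)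
    (tendsto_bdd_div_atTop_nhds_zero (.of_forall hδ0) (.of_forall hM) hZ)
    (.of_forall fun _ => dualMargin_pos hζ) (.of_forall hv0) (.of_forall hv)
end
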